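/- arXiv:0704.2391 — 3 statements merged into one kernel-verified Lean document; each statement's English description precedes it below -/
import Mathlib

section
/- The system (S) restricted by the parameter relations α4 = α3 = α0 = α1 admits the following Bäcklund transformation of affine Weyl group type A2^(2): if (x,y,z) is a solution of (S) with parameters (α1, α1, α2, α1, α1) (on an interval where x, y, x-η and y-1 do not vanish), then (x, y, z - α1·(y(x-η)(y-1) + x(x-η)(y-1) + xy(y-1) + xy(x-η))/(xy(x-η)(y-1))) is a solution of (S) with parameters (-α1, -α1, α2+4α1, -α1, -α1). -/
/-!
The map fixes `x` and `y` and replaces `z` by `z - a1 * w`, where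
`w = 1/x + 1/y + 1/(x - eta) + 1/(y - 1)` (`shift_eq`). Changing the parameters from
`(a1, a1, a2, a1, a1)` to `(-a1, -a1, a2 + 4 * a1, -a1, -a1)` changes `P1` and `P2` by an amount
that the shift of `z` cancels through their only `z`-dependent term
`∓2 x y (y-1) (x-eta) (2x-2y+1-eta) z`, so the equations for `x` and `y` persist (`P1_shift`,
`P2_shift`); this holds for every `a2`. For the third equation, the derivative of `w` is computed
from the equations for `x` and `y`, and what is left is the rational identity `P3_shift`, which
does use the normalization `4 * a1 + 2 * a2 = 1`.
-/

noncomputable section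

/-- Right-hand side polynomial `P1` of the system of type `D₄⁽¹⁾`. -/
def P1 {R : Type*} [CommRing R] (eta a0 a1 a2 a3 a4 x y z : R) : R :=
  -2*x*(y-1)*y*z*(x-eta)*(2*x-2*y+1-eta)
  - 2*(2*a0+2*a1+4*a2+a3+a4)*x^3*y
  - 2*(a0+a1)*x*y^3
  + (5*a0+5*a1+6*a2+a3+a4)*x^2*y^2
  - (5*a0+5*a1+6*a2+2*a3 - 3*(2*a0+2*a1+4*a2+a3+a4)*eta)*x^2*y
  + (3*(a0+a1) - (4*a0+6*a1+6*a2+a3+a4)*eta)*x*y^2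
  + x^4
  + 2*(a0+a1+2*a2+a3-eta)*x^3
  + 2*a1*eta*y^3
  + ((a0+a1+2*a2+a3)*(eta^2-3*eta+1) + a4*eta^2)*x^2
  + a1*(eta-3)*eta*y^2
  + (-(a0+a1) + 2*(2*a0+3*a1+3*a2+a3)*eta - (2*a0+2*a1+4*a2+a3+a4)*eta^2)*x*y
  + (a0+a1+2*a2+a3)*(eta-1)*eta*x
  - a1*(eta-1)*eta*y

/-- Right-hand side polynomial `P2` of the system of type `D₄⁽¹⁾`. -/
def P2 {R : Type*} [CommRing R] (eta a0 a1 a2 a3 a4 x y z : R) : R :=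
  2*x*(y-1)*y*z*(x-eta)*(2*x-2*y+1-eta)
  - 2*(a3+a4)*x^3*y
  - 2*(a0+a1+4*a2+2*a3+2*a4)*x*y^3
  + (a0+a1+6*a2+5*a3+5*a4)*x^2*y^2
  + (-(a0+a1+6*a2+4*a3+6*a4) + 3*(a3+a4)*eta)*x^2*y
  + (3*(a0+a1+4*a2+2*a3+2*a4) - (2*a0+6*a2+5*a3+5*a4)*eta)*x*y^2
  + y^4
  + 2*a4*x^3
  + 2*((a0+2*a2+a3+a4)*eta - 1)*y^3
  - a4*(3*eta-1)*x^2
  + (1 - 3*(a0+2*a2+a3+a4)*eta + (a0+2*a2+a3+a4)*eta^2)*y^2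
  + (-(a0+a1+4*a2+2*a3+2*a4) + 2*(a0+3*a2+2*a3+3*a4)*eta - (a3+a4)*eta^2)*x*y
  + a4*(eta-1)*eta*x
  - (a0+2*a2+a3+a4)*(eta-1)*eta*y

/-- Right-hand side polynomial `P3` of the system of type `D₄⁽¹⁾`. -/
def P3 {R : Type*} [CommRing R] (eta a0 a1 a2 a3 a4 x y z : R) : R :=
  (2*x-2*y+1-eta)*(2*x^2*y + 2*x*y^2 - x^2 - eta*y^2 - 2*(eta+1)*x*y + eta*(x+y))*z^2
  + z*( -2*(a3+a4)*x^3 + 2*(a0+a1)*y^3 + 2*(a0+a1+6*a2+2*a3+2*a4)*x^2*y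
      - 2*(2*a0+2*a1+6*a2+a3+a4)*x*y^2
      + (-(a0+a1+6*a2+4*a3) + 3*(a3+a4)*eta)*x^2
      + (-3*(a0+a1) + (4*a0+6*a2+a3+a4)*eta)*y^2
      - 4*(-(a0+a1+3*a2+a3) + (a0+3*a2+a3+a4)*eta)*x*y
      + (-(a0+a1+4*a2+2*a3) + 2*(a0+3*a2+2*a3)*eta - (a3+a4)*eta^2)*x
      + (a0+a1 - 2*(2*a0+3*a2+a3)*eta + (2*a0+4*a2+a3+a4)*eta^2)*y
      - (a0+2*a2+a3)*(eta-1)*eta )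
  + a2*( (a0+a1+2*a2-a3-a4)*x^2 + (a0+a1-2*a2-a3-a4)*y^2 - 2*(a0+a1-a3-a4)*x*y
       + (a0+a1-2*a3 - (2*a0+2*a2-a3-a4)*eta)*x
       + (-a0-a1+2*a2+2*a3 + (2*a0-a3-a4)*eta)*y
       + (eta-1)*(a2+a3+(a0+a2)*eta) )

/-- `(x, y, z)` is a solution of the system (S) of type `D₄⁽¹⁾` on the set `I`:
`(2η/b(t))·x' = P1`, `-(2η/b(t))·y' = P2`, `(2η/b(t))·z' = P3`. -/
def IsSolD4 (I : Set ℝ) (b : ℝ → ℂ) (eta a0 a1 a2 a3 a4 : ℂ) (x y z : ℝ → ℂ) : Prop :=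
  ∀ t ∈ I,
    HasDerivAt x (b t / (2*eta) * P1 eta a0 a1 a2 a3 a4 (x t) (y t) (z t)) t ∧
    HasDerivAt y (-(b t / (2*eta)) * P2 eta a0 a1 a2 a3 a4 (x t) (y t) (z t)) t ∧
    HasDerivAt z (b t / (2*eta) * P3 eta a0 a1 a2 a3 a4 (x t) (y t) (z t)) t

/-- Partial fraction form of the quantity subtracted from `z`. -/
lemma shift_eq {eta a x y : ℂ} (hx : x ≠ 0) (hy : y ≠ 0) (hxe : x - eta ≠ 0) (hy1 : y - 1 ≠ 0) :
    a*(y*(x - eta)*(y - 1) + x*(x - eta)*(y - 1) + x*y*(y - 1) + x*y*(x - eta))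
      /(x*y*(x - eta)*(y - 1)) = a*(x⁻¹ + y⁻¹ + (x - eta)⁻¹ + (y - 1)⁻¹) := by
  field_simp

lemma P1_shift {eta a a2 x y : ℂ} (z : ℂ) (hx : x ≠ 0) (hy : y ≠ 0) (hxe : x - eta ≠ 0)
    (hy1 : y - 1 ≠ 0) :
    P1 eta (-a) (-a) (a2+4*a) (-a) (-a) x y
      (z - a*(x⁻¹ + y⁻¹ + (x - eta)⁻¹ + (y - 1)⁻¹)) = P1 eta a a a2 a a x y z := by
  unfold P1
  field_simp
  ring

lemma P2_shift {eta a a2 x y : ℂ} (z : ℂ) (hx : x ≠ 0) (hy : y ≠ 0) (hxe : x - eta ≠ 0)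
    (hy1 : y - 1 ≠ 0) :
    P2 eta (-a) (-a) (a2+4*a) (-a) (-a) x y
      (z - a*(x⁻¹ + y⁻¹ + (x - eta)⁻¹ + (y - 1)⁻¹)) = P2 eta a a a2 a a x y z := by
  unfold P2
  field_simp
  ring

/-- The right-hand side is the derivative of `z - a * w` along (S), up to the factor
`b / (2 * eta)`. -/
lemma P3_shift {eta a a2 x y : ℂ} (z : ℂ) (hsum : a + a + 2*a2 + a + a = 1)
    (hx : x ≠ 0) (hy : y ≠ 0) (hxe : x - eta ≠ 0) (hy1 : y - 1 ≠ 0) :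
    P3 eta (-a) (-a) (a2+4*a) (-a) (-a) x y
      (z - a*(x⁻¹ + y⁻¹ + (x - eta)⁻¹ + (y - 1)⁻¹)) =
    P3 eta a a a2 a a x y z
      + a*(P1 eta a a a2 a a x y z*(1/x^2 + 1/(x - eta)^2)
        - P2 eta a a a2 a a x y z*(1/y^2 + 1/(y - 1)^2)) := by
  obtain rfl : a2 = 1/2 - 2*a := by linear_combination hsum/2
  unfold P1 P2 P3
  field_simp
  ring

/-- Bäcklund transformation `s₁` of affine Weyl group type `A₂⁽²⁾`
for the system (S) restricted by `α₄ = α₃ = α₀ = α₁`. -/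
theorem statement8 (I : Set ℝ) (b : ℝ → ℂ) (eta a1 a2 : ℂ)
    (heta : eta ≠ 0) (hb : ∀ t ∈ I, b t ≠ 0)
    (hsum : a1 + a1 + 2*a2 + a1 + a1 = 1)
    (x y z : ℝ → ℂ) (hsol : IsSolD4 I b eta a1 a1 a2 a1 a1 x y z)
    (hx : ∀ t ∈ I, x t ≠ 0) (hy : ∀ t ∈ I, y t ≠ 0)
    (hxe : ∀ t ∈ I, x t ≠ eta) (hy1 : ∀ t ∈ I, y t ≠ 1) :
    IsSolD4 I b eta (-a1) (-a1) (a2+4*a1) (-a1) (-a1)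
      x y (fun t =>
        z t - a1*(y t*(x t - eta)*(y t - 1) + x t*(x t - eta)*(y t - 1)
                  + x t*y t*(y t - 1) + x t*y t*(x t - eta))
              /(x t*y t*(x t - eta)*(y t - 1))) := by
  intro t ht
  obtain ⟨h1, h2, h3⟩ := hsol t ht
  have x0 := hx t ht
  have y0 := hy t ht
  have xe := sub_ne_zero.mpr (hxe t ht)
  have y1 := sub_ne_zero.mpr (hy1 t ht)
  refine ⟨?_, ?_, ?_⟩
  · simpa only [shift_eq x0 y0 xe y1, P1_shift (z t) x0 y0 xe y1] using h1
  · simpa only [shift_eq x0 y0 xe y1, P2_shift (z t) x0 y0 xe y1] using h2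
  · have hw := h3.sub (((((h1.inv x0).add (h2.inv y0)).add
      ((h1.sub_const eta).inv xe)).add ((h2.sub_const 1).inv y1)).const_mul a1)
    -- The two forms of the shift agree wherever no denominator vanishes, which holds in a
    -- neighbourhood of `t` by continuity of `x` and `y`.
    have hev : (fun s => z s - a1*(y s*(x s - eta)*(y s - 1) + x s*(x s - eta)*(y s - 1)
                  + x s*y s*(y s - 1) + x s*y s*(x s - eta))
              /(x s*y s*(x s - eta)*(y s - 1))) =ᶠ[nhds t]
        fun s => z s - a1*((x s)⁻¹ + (y s)⁻¹ + (x s - eta)⁻¹ + (y s - 1)⁻¹) := by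
      filter_upwards [h1.continuousAt.eventually_ne x0, h2.continuousAt.eventually_ne y0,
        h1.continuousAt.eventually_ne (hxe t ht), h2.continuousAt.eventually_ne (hy1 t ht)]
        with s s1 s2 s3 s4
      rw [shift_eq s1 s2 (sub_ne_zero.mpr s3) (sub_ne_zero.mpr s4)]
    refine HasDerivAt.congr_of_eventuallyEq ?_ hev
    simp only [shift_eq x0 y0 xe y1]
    rw [P3_shift (z t) hsum x0 y0 xe y1]
    refine hw.congr_deriv ?_
    ring
end
end

section
/- Suppose (X,Y) is a solution of the reduced Hamiltonian system (R), where b(t) is differentiable and nonvanishing and X(t) ∉ {0, 1, η} for all t. Then X satisfies the second-order ODE: d²X/dt² = (1/(2(X-1)) + 1/X + 1/(2(X-η)))·(dX/dt)² + (b'(t)/b(t))·dX/dt - (b(t)²/(8η²(X-1)(X-η)))·((η-1)³·X²·((α0η+α3)X - (1-(α1+2α2+α4))η)·((α0η-α3)X + (1-(2α0+α1+2α2+α4))η)). -/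
/-!
Write `c = -(η-1)/(2η)`, `P = (X-1)(X-η)`, `L = α₀η(X-1) + α₃(X-η)`. The first Hamilton equation
reads `X' = c b X W` with `W = L - 2P(XY + α₂)`, which is affine in `Y`, so `X'` can be
differentiated once more along the flow. Eliminating `Y` through `W` gives
`X'' = (b'/b) X' + (1/X + P_X/(2P)) X'² + c² b² X² L (2P L_X - P_X L)/(2P)`, and the relation
`2P L_X - P_X L = -(η-1)(α₀η(X-1) - α₃(X-η))` together with `α₀+α₁+2α₂+α₃+α₄ = 1` turns the last
term into the one claimed. The partial derivatives of the Hamiltonian are `hasDerivAt_Hred_right`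
and `hasDerivAt_Hred_left`.
-/

noncomputable section

/-- The reduced polynomial Hamiltonian `H(X,Y,t)` (with `bt = b(t)`). -/
def Hred (eta a0 a1 a2 a3 a4 bt X Y : ℂ) : ℂ :=
  -((eta-1)/(2*eta)) * bt *
    (-(X-1)*(X-eta)*X^2*Y^2
      - (2*a2*(X-1)*(X-eta) - a0*eta*(X-1) - a3*(X-eta))*X*Y
      - a2^2*X^2
      + a2*(1-(a0+a1+a2+a4) + (1-(a1+a2+a3+a4))*eta)*X)

/-- `(X, Y)` is a solution of the reduced Hamiltonian system (R):
`dX/dt = ∂H/∂Y`, `dY/dt = -∂H/∂X`. -/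
def IsSolR (I : Set ℝ) (b : ℝ → ℂ) (eta a0 a1 a2 a3 a4 : ℂ) (X Y : ℝ → ℂ) : Prop :=
  ∀ t ∈ I,
    HasDerivAt X (deriv (fun w => Hred eta a0 a1 a2 a3 a4 (b t) (X t) w) (Y t)) t ∧
    HasDerivAt Y (-(deriv (fun w => Hred eta a0 a1 a2 a3 a4 (b t) w (Y t)) (X t))) t

/-- The partial derivative `∂H/∂Y`. -/
lemma hasDerivAt_Hred_right (eta a0 a1 a2 a3 a4 bt X Y : ℂ) :
    HasDerivAt (fun w => Hred eta a0 a1 a2 a3 a4 bt X w)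
      (-((eta-1)/(2*eta)) * bt *
        (-2*(X-1)*(X-eta)*X^2*Y
          - (2*a2*(X-1)*(X-eta) - a0*eta*(X-1) - a3*(X-eta))*X)) Y := by
  have hY := hasDerivAt_id' Y
  unfold Hred
  refine HasDerivAt.congr_deriv ((((((hY.pow 2).const_mul (-(X-1)*(X-eta)*X^2)).sub
    (hY.const_mul ((2*a2*(X-1)*(X-eta) - a0*eta*(X-1) - a3*(X-eta))*X))).sub_const
      (a2^2*X^2)).add_const
    (a2*(1-(a0+a1+a2+a4) + (1-(a1+a2+a3+a4))*eta)*X)).const_mul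
      (-((eta-1)/(2*eta)) * bt)) ?_
  push_cast
  ring

/-- The partial derivative `∂H/∂X`. -/
lemma hasDerivAt_Hred_left (eta a0 a1 a2 a3 a4 bt X Y : ℂ) :
    HasDerivAt (fun w => Hred eta a0 a1 a2 a3 a4 bt w Y)
      (-((eta-1)/(2*eta)) * bt *
        (-((2*X-1-eta)*X^2 + 2*(X-1)*(X-eta)*X)*Y^2
          - ((2*a2*(2*X-1-eta) - a0*eta - a3)*X
            + (2*a2*(X-1)*(X-eta) - a0*eta*(X-1) - a3*(X-eta)))*Y
          - 2*a2^2*X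
          + a2*(1-(a0+a1+a2+a4) + (1-(a1+a2+a3+a4))*eta))) X := by
  have hX := hasDerivAt_id' X
  have h1 := hX.sub_const 1
  have he := hX.sub_const eta
  unfold Hred
  refine HasDerivAt.congr_deriv ((((((h1.neg.mul he).mul (hX.pow 2)).mul_const (Y^2)).sub
    ((((((h1.const_mul (2*a2)).mul he).sub (h1.const_mul (a0*eta))).sub
      (he.const_mul a3)).mul hX).mul_const Y)).sub
      ((hX.pow 2).const_mul (a2^2)) |>.add
    (hX.const_mul (a2*(1-(a0+a1+a2+a4) + (1-(a1+a2+a3+a4))*eta)))).const_mul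
      (-((eta-1)/(2*eta)) * bt)) ?_
  simp only [Pi.mul_apply, Pi.sub_apply, Pi.neg_apply, Pi.pow_apply]
  push_cast
  ring

/-- elimination of `Y` from the reduced Hamiltonian system (R) gives a
second-order nonlinear ODE of Painlevé type for `X`. -/
theorem statement11 (I : Set ℝ) (hI : IsOpen I) (b b' : ℝ → ℂ) (eta a0 a1 a2 a3 a4 : ℂ)
    (heta : eta ≠ 0) (hb : ∀ t ∈ I, b t ≠ 0)
    (hb' : ∀ t ∈ I, HasDerivAt b (b' t) t)
    (hsum : a0 + a1 + 2*a2 + a3 + a4 = 1)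
    (X Y X' : ℝ → ℂ)
    (hX' : ∀ t ∈ I,
      X' t = deriv (fun w => Hred eta a0 a1 a2 a3 a4 (b t) (X t) w) (Y t))
    (hsol : ∀ t ∈ I,
      HasDerivAt X (X' t) t ∧
      HasDerivAt Y (-(deriv (fun w => Hred eta a0 a1 a2 a3 a4 (b t) w (Y t)) (X t))) t)
    (hX0 : ∀ t ∈ I, X t ≠ 0) (hX1 : ∀ t ∈ I, X t ≠ 1) (hXe : ∀ t ∈ I, X t ≠ eta) :
    ∀ t ∈ I,
      HasDerivAt X'
        ((1/(2*(X t - 1)) + 1/(X t) + 1/(2*(X t - eta))) * (X' t)^2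
          + (b' t / b t) * X' t
          - (b t)^2/(8*eta^2*(X t - 1)*(X t - eta)) *
            ((eta-1)^3 * (X t)^2
              * ((a0*eta+a3)*(X t) - (1-(a1+2*a2+a4))*eta)
              * ((a0*eta-a3)*(X t) + (1-(2*a0+a1+2*a2+a4))*eta))) t := by
  intro t ht
  obtain ⟨hX, hY⟩ := hsol t ht
  have hB := hb' t ht
  have hXt := hX' t ht
  rw [(hasDerivAt_Hred_right eta a0 a1 a2 a3 a4 (b t) (X t) (Y t)).deriv] at hXt
  rw [(hasDerivAt_Hred_left eta a0 a1 a2 a3 a4 (b t) (X t) (Y t)).deriv] at hY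
  -- `I` is open, so the formula for `X'` holds near `t` and may be differentiated at `t`.
  have hev : X' =ᶠ[nhds t] fun s => -((eta-1)/(2*eta)) * b s *
      (-2*(X s-1)*(X s-eta)*(X s)^2*Y s
        - (2*a2*(X s-1)*(X s-eta) - a0*eta*(X s-1) - a3*(X s-eta))*X s) := by
    filter_upwards [hI.mem_nhds ht] with s hs
    rw [hX' s hs, (hasDerivAt_Hred_right eta a0 a1 a2 a3 a4 (b s) (X s) (Y s)).deriv]
  refine HasDerivAt.congr_of_eventuallyEq ?_ hev
  have h1 := hX.sub_const 1
  have he := hX.sub_const eta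
  have hD := (hB.const_mul (-((eta-1)/(2*eta)))).mul
    (((((h1.const_mul (-2)).mul he).mul (hX.pow 2)).mul hY).sub
      (((((h1.const_mul (2*a2)).mul he).sub (h1.const_mul (a0*eta))).sub
        (he.const_mul a3)).mul hX))
  refine hD.congr_deriv ?_
  symm
  simp only [Pi.mul_apply, Pi.sub_apply, Pi.pow_apply]
  rw [hXt]
  have hx0 := hX0 t ht
  have hx1 := sub_ne_zero.mpr (hX1 t ht)
  have hxe := sub_ne_zero.mpr (hXe t ht)
  have hbt := hb t ht
  obtain rfl : a1 = 1 - a0 - 2*a2 - a3 - a4 := by linear_combination hsum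
  clear hD hev hXt hX hY hB h1 he
  generalize X t = x at *
  generalize Y t = y at *
  generalize b t = β at *
  push_cast
  field_simp
  ring
end
end

section
/- The symmetric Painlevé III system admits the following Bäcklund transformations of extended affine Weyl group type C2^(1): if (f0, f1, f2) is a solution with data (η; α0, α1, α2) (on an interval where the indicated denominators do not vanish), then: (s0) (f0, f1 + α0/f0, f2) is a solution with data (η; -α0, α1+α0, α2); (s1) (f0 - 2α1/f1 + η/f1², f1, f2 - 2α1/f1 + η/f1²) is a solution with data (-η; α0+2α1, -α1, α2+2α1); (s2) (f0, f1 + α2/f2, f2) is a solution with data (η; α0, α1+α2, -α2); (π) (f2, f1, f0) is a solution with data (η; α2, α1, α0). -/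
/-!
Each transformation is checked by differentiating the new functions with the quotient rule and
comparing with the new right-hand sides: for `s₀` and `s₁` these are identities of rational
functions in `f₀, f₁, f₂` and the parameters. The system is visibly invariant under the
reflection `π` exchanging the indices `0` and `2`, and `s₂ = π s₀ π`.
-/

noncomputable section

/-- `(f0, f1, f2)` is a solution of the symmetric Painlevé III system on `I`,
with constant `η` and parameters `α0, α1, α2`. -/
def IsSolPIII (I : Set ℝ) (eta a0 a1 a2 : ℂ) (f0 f1 f2 : ℝ → ℂ) : Prop :=
  ∀ t ∈ I,
    HasDerivAt f0 (-2*f0 t*f1 t*f2 t + (a0+2*a1)*f0 t - a0*f2 t) t ∧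
    HasDerivAt f1 ((f0 t + f2 t)*(f1 t)^2 - 2*a1*f1 t + eta) t ∧
    HasDerivAt f2 (-2*f0 t*f1 t*f2 t + (2*a1+a2)*f2 t - a2*f0 t) t

theorem IsSolPIII.reflect {I : Set ℝ} {eta a0 a1 a2 : ℂ} {f0 f1 f2 : ℝ → ℂ}
    (h : IsSolPIII I eta a0 a1 a2 f0 f1 f2) : IsSolPIII I eta a2 a1 a0 f2 f1 f0 := by
  intro t ht
  obtain ⟨h0, h1, h2⟩ := h t ht
  refine ⟨?_, ?_, ?_⟩
  · convert h2 using 1; ring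
  · convert h1 using 1; ring
  · convert h0 using 1; ring

theorem IsSolPIII.s0 {I : Set ℝ} {eta a0 a1 a2 : ℂ} {f0 f1 f2 : ℝ → ℂ}
    (h : IsSolPIII I eta a0 a1 a2 f0 f1 f2) (hne : ∀ t ∈ I, f0 t ≠ 0) :
    IsSolPIII I eta (-a0) (a1+a0) a2 f0 (fun t => f1 t + a0/f0 t) f2 := by
  intro t ht
  obtain ⟨h0, h1, h2⟩ := h t ht
  have hz := hne t ht
  refine ⟨?_, ?_, ?_⟩
  · convert h0 using 1; field_simp; ring
  · refine (h1.fun_add ((hasDerivAt_const t a0).fun_div h0 hz)).congr_deriv ?_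
    field_simp
    ring
  · convert h2 using 1; field_simp; ring

/-- The common correction `-2α₁/f₁ + η/f₁²` that `s₁` adds to `f₀` and `f₂` is a function of `f₁`
alone, so a single computation, up to the reflection, serves both components. -/
theorem IsSolPIII.hasDerivAt_s1 {I : Set ℝ} {eta a0 a1 a2 : ℂ} {f0 f1 f2 : ℝ → ℂ}
    (h : IsSolPIII I eta a0 a1 a2 f0 f1 f2) {t : ℝ} (ht : t ∈ I) (hz : f1 t ≠ 0) :
    HasDerivAt (fun t => f0 t - 2*a1/f1 t + eta/(f1 t)^2)
      (-2*(f0 t - 2*a1/f1 t + eta/(f1 t)^2)*f1 t*(f2 t - 2*a1/f1 t + eta/(f1 t)^2)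
        + a0*(f0 t - 2*a1/f1 t + eta/(f1 t)^2)
        - (a0+2*a1)*(f2 t - 2*a1/f1 t + eta/(f1 t)^2)) t := by
  obtain ⟨h0, h1, -⟩ := h t ht
  refine ((h0.fun_sub ((hasDerivAt_const t (2*a1)).fun_div h1 hz)).fun_add
    ((hasDerivAt_const t eta).fun_div (h1.fun_pow 2) (pow_ne_zero 2 hz))).congr_deriv ?_
  field_simp
  ring

theorem IsSolPIII.s1 {I : Set ℝ} {eta a0 a1 a2 : ℂ} {f0 f1 f2 : ℝ → ℂ}
    (h : IsSolPIII I eta a0 a1 a2 f0 f1 f2) (hne : ∀ t ∈ I, f1 t ≠ 0) :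
    IsSolPIII I (-eta) (a0+2*a1) (-a1) (a2+2*a1)
      (fun t => f0 t - 2*a1/f1 t + eta/(f1 t)^2) f1
      (fun t => f2 t - 2*a1/f1 t + eta/(f1 t)^2) := by
  intro t ht
  have hz := hne t ht
  refine ⟨?_, ?_, ?_⟩
  · convert h.hasDerivAt_s1 ht hz using 1; ring
  · convert (h t ht).2.1 using 1; field_simp; ring
  · convert h.reflect.hasDerivAt_s1 ht hz using 1; ring

/-- Bäcklund transformations `s₀, s₁, s₂, π` of extended affine Weyl
group type `C₂⁽¹⁾` for the symmetric Painlevé III system. -/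
theorem statement17 (I : Set ℝ) (eta a0 a1 a2 : ℂ) (heta : eta ≠ 0)
    (hsum : a0 + 2*a1 + a2 = 1)
    (f0 f1 f2 : ℝ → ℂ) (hsol : IsSolPIII I eta a0 a1 a2 f0 f1 f2) :
    ((∀ t ∈ I, f0 t ≠ 0) →
      IsSolPIII I eta (-a0) (a1+a0) a2
        f0 (fun t => f1 t + a0/f0 t) f2) ∧
    ((∀ t ∈ I, f1 t ≠ 0) →
      IsSolPIII I (-eta) (a0+2*a1) (-a1) (a2+2*a1)
        (fun t => f0 t - 2*a1/f1 t + eta/(f1 t)^2) f1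
        (fun t => f2 t - 2*a1/f1 t + eta/(f1 t)^2)) ∧
    ((∀ t ∈ I, f2 t ≠ 0) →
      IsSolPIII I eta a0 (a1+a2) (-a2)
        f0 (fun t => f1 t + a2/f2 t) f2) ∧
    IsSolPIII I eta a2 a1 a0 f2 f1 f0 := by
  exact ⟨hsol.s0, hsol.s1, fun hne => (hsol.reflect.s0 hne).reflect, hsol.reflect⟩
end
end
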